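/- Let Λ = ℤ_p[[T₁,…,T_d]] and M a finitely generated torsion Λ-module. Then there exists a Λ-module homomorphism M → Ext^1_Λ(Ext^1_Λ(M,Λ), Λ) whose kernel and cokernel are pseudo-null. -/

import Mathlib

open CategoryTheory

/-- `extModule R M N n` is the `n`-th Ext group `Ext^n_R(M, N)` in the category of
`R`-modules. -/
noncomputable def extModule (R : Type) [CommRing R] (M N : Type) [AddCommGroup M] [Module R M]
    [AddCommGroup N] [Module R N] (n : ℕ) : ModuleCat R :=
  ((Ext R (ModuleCat R) n).obj (Opposite.op (ModuleCat.of R M))).obj (ModuleCat.of R N)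

/-- A module over a commutative ring is pseudo-null if its localization at every prime
of height at most one vanishes. -/
def IsPseudoNull (R : Type) [CommRing R] (M : Type) [AddCommGroup M] [Module R M] : Prop :=
  ∀ (P : Ideal R) (hP : P.IsPrime), Order.height (⟨P, hP⟩ : PrimeSpectrum R) ≤ 1 →
    Subsingleton (LocalizedModule P.primeCompl M)

/-!
Let `K` be the field of fractions of a Noetherian normal domain `R`. For a torsion module `N`,
dimension shifting along `0 → R → K → K/R → 0` identifies `Ext¹(N, R)` with `Hom(N, K/R)`, so the
double `Ext¹` of a torsion module `M` is its double dual with respect to `K/R`, and `M` maps to the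
latter by evaluation. If `M` is finitely generated, evaluation commutes with localization, and at a
prime `P` of height at most one `R_P` is a principal ideal domain. There `K/R_P` is divisible, hence
injective, and its `a`-torsion is `R_P/a`, which makes evaluation bijective.

Power series over a Noetherian normal domain `A` with field of fractions `K` are again normal: if
`f ∈ K⟦X⟧` is almost integral over `A⟦X⟧`, then so is its lowest coefficient over `A`, and
subtracting lowest terms one by one gives the same for every coefficient.
-/

/-- The module `K/R`. For `K` the field of fractions of a domain `R` it is the dualizing object for
torsion modules: `Ext¹_R(N, R)` is `Hom_R(N, K/R)` for every torsion module `N`. -/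
abbrev FractionQuotient (R K : Type*) [CommRing R] [Field K] [Algebra R K] :=
  K ⧸ (1 : Submodule R K)

section FractionQuotient

variable {R K : Type*} [CommRing R] [Field K] [Algebra R K]

theorem FractionQuotient.mk_eq_zero_iff {x : K} :
    (Submodule.Quotient.mk x : FractionQuotient R K) = 0 ↔ ∃ r : R, algebraMap R K r = x := by
  rw [Submodule.Quotient.mk_eq_zero, Submodule.mem_one]

theorem FractionQuotient.exists_smul_eq [FaithfulSMul R K] {a : R} (ha : a ≠ 0)
    (y : FractionQuotient R K) : ∃ z, a • z = y := by
  obtain ⟨x, rfl⟩ := Submodule.Quotient.mk_surjective _ y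
  refine ⟨Submodule.Quotient.mk ((algebraMap R K a)⁻¹ * x), ?_⟩
  rw [← Submodule.Quotient.mk_smul, Algebra.smul_def,
    mul_inv_cancel_left₀ ((FaithfulSMul.algebraMap_eq_zero_iff R K).not.2 ha)]

theorem FractionQuotient.torsionBy_eq_span [FaithfulSMul R K] {a : R} (ha : a ≠ 0) :
    Submodule.torsionBy R (FractionQuotient R K) a =
      Submodule.span R {Submodule.Quotient.mk (algebraMap R K a)⁻¹} := by
  have ha' : algebraMap R K a ≠ 0 := (FaithfulSMul.algebraMap_eq_zero_iff R K).not.2 ha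
  ext y
  obtain ⟨x, rfl⟩ := Submodule.Quotient.mk_surjective _ y
  rw [Submodule.mem_torsionBy_iff, Submodule.mem_span_singleton]
  constructor
  · intro h
    rw [← Submodule.Quotient.mk_smul, FractionQuotient.mk_eq_zero_iff] at h
    obtain ⟨r, hr⟩ := h
    refine ⟨r, ?_⟩
    rw [← Submodule.Quotient.mk_smul, Algebra.smul_def, hr, Algebra.smul_def, mul_right_comm,
      mul_inv_cancel₀ ha', one_mul]
  · rintro ⟨r, hr⟩
    rw [← hr, smul_comm a r, ← Submodule.Quotient.mk_smul _ a, Algebra.smul_def,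
      mul_inv_cancel₀ ha',
      FractionQuotient.mk_eq_zero_iff.2 ⟨1, map_one _⟩, smul_zero]

theorem FractionQuotient.exists_apply_eq_sum_smul [FaithfulSMul R K] {a : R} (ha : a ≠ 0)
    {ι : Type*} [Fintype ι] (Ψ : (ι → FractionQuotient R K) →ₗ[R] FractionQuotient R K) :
    ∃ l : ι → R, ∀ f, a • f = 0 → Ψ f = ∑ i, l i • f i := by
  classical
  let u : FractionQuotient R K := Submodule.Quotient.mk (algebraMap R K a)⁻¹
  have smul_eq_zero_iff (y : FractionQuotient R K) : a • y = 0 ↔ ∃ c : R, c • u = y := by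
    rw [← Submodule.mem_torsionBy_iff, FractionQuotient.torsionBy_eq_span ha,
      Submodule.mem_span_singleton]
  have hu : a • u = 0 := (smul_eq_zero_iff u).2 ⟨1, one_smul R u⟩
  have hcoord (i : ι) : ∃ l : R, l • u = Ψ (Pi.single i u) := (smul_eq_zero_iff _).1 <| by
    rw [← map_smul, ← Pi.single_smul, hu, Pi.single_zero, map_zero]
  choose l hl using hcoord
  refine ⟨l, fun f hf => ?_⟩
  choose c hc using fun i => (smul_eq_zero_iff (f i)).1 (congrFun hf i)
  calc Ψ f = ∑ i, Ψ (Pi.single i (f i)) := by rw [← map_sum, Finset.univ_sum_single]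
    _ = ∑ i, l i • f i := Finset.sum_congr rfl fun i _ => by
      rw [← hc, Pi.single_smul, map_smul, ← hl, smul_comm]

end FractionQuotient

section Injective

variable {R : Type*} [CommRing R]

theorem baer_of_forall_exists_smul_eq [IsPrincipalIdealRing R] {Q : Type*} [AddCommGroup Q]
    [Module R Q] (h : ∀ a : R, a ≠ 0 → ∀ y : Q, ∃ z, a • z = y) : Module.Baer R Q := by
  intro I g
  obtain ⟨b, rfl⟩ := (IsPrincipalIdealRing.principal I).principal
  obtain ⟨z, hz⟩ : ∃ z, b • z = g ⟨b, Submodule.mem_span_singleton_self b⟩ := by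
    by_cases hb : b = 0
    · subst hb
      refine ⟨0, ?_⟩
      rw [smul_zero]
      exact (map_zero g).symm
    · exact h b hb _
  refine ⟨LinearMap.toSpanSingleton R Q z, fun x hx => ?_⟩
  obtain ⟨c, rfl⟩ := Submodule.mem_span_singleton.1 hx
  rw [LinearMap.toSpanSingleton_apply, smul_assoc, hz, ← map_smul]
  rfl

theorem baer_of_faithfulSMul (K : Type*) [Field K] [Algebra R K] [FaithfulSMul R K] :
    Module.Baer R K := by
  intro I g
  by_cases hI : I = ⊥
  · subst hI
    refine ⟨0, fun x hx => ?_⟩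
    obtain rfl := (Submodule.mem_bot R).1 hx
    exact (map_zero g).symm
  obtain ⟨b, hb, hb0⟩ := Submodule.exists_mem_ne_zero_of_ne_bot hI
  have hb0' : algebraMap R K b ≠ 0 := (FaithfulSMul.algebraMap_eq_zero_iff R K).not.2 hb0
  refine ⟨LinearMap.toSpanSingleton R K ((algebraMap R K b)⁻¹ * g ⟨b, hb⟩), fun x hx => ?_⟩
  have hcomm : x • g ⟨b, hb⟩ = b • g ⟨x, hx⟩ := by
    rw [← map_smul, ← map_smul]
    exact congrArg g (Subtype.ext (mul_comm x b))
  rw [LinearMap.toSpanSingleton_apply, ← mul_smul_comm, hcomm, Algebra.smul_def,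
    inv_mul_cancel_left₀ hb0']

theorem exists_comp_eq_of_ker_le_ker {E N P : Type*} [AddCommGroup E] [Module R E]
    [AddCommGroup N] [Module R N] [AddCommGroup P] [Module R P] (hE : Module.Baer R E)
    {f : P →ₗ[R] N} {φ : P →ₗ[R] E} (h : LinearMap.ker f ≤ LinearMap.ker φ) :
    ∃ θ : N →ₗ[R] E, θ ∘ₗ f = φ := by
  obtain ⟨θ, hθ⟩ := hE.extension_property ((LinearMap.ker f).liftQ f le_rfl)
    (LinearMap.ker_eq_bot.1 (Submodule.ker_liftQ_eq_bot' _ _ rfl)) ((LinearMap.ker f).liftQ φ h)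
  exact ⟨θ, LinearMap.ext fun x => LinearMap.congr_fun hθ (Submodule.Quotient.mk x)⟩

theorem baer_fractionQuotient [IsPrincipalIdealRing R] (K : Type*) [Field K] [Algebra R K]
    [FaithfulSMul R K] : Module.Baer R (FractionQuotient R K) :=
  baer_of_forall_exists_smul_eq fun _ => FractionQuotient.exists_smul_eq

end Injective

section Bidual

open Module

/-- The evaluation map from `M` to its double dual with respect to `K/R`. -/
abbrev bidualEval (R K M : Type*) [CommRing R] [Field K] [Algebra R K] [AddCommGroup M]
    [Module R M] : M →ₗ[R] (M →ₗ[R] FractionQuotient R K) →ₗ[R] FractionQuotient R K :=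
  LinearMap.applyₗ

variable {R M : Type*} [CommRing R] [AddCommGroup M] [Module R M]

theorem exists_mem_nonZeroDivisors_forall_smul_eq_zero [Module.Finite R M] (hM : IsTorsion R M) :
    ∃ a ∈ nonZeroDivisors R, ∀ m : M, a • m = 0 := by
  obtain ⟨a, haM, ha⟩ := Submodule.annihilator_top_inter_nonZeroDivisors hM
  exact ⟨a, ha, fun m => Submodule.mem_annihilator.1 haM m trivial⟩

theorem isTorsion_linearMap [Module.Finite R M] (N : Type*) [AddCommGroup N] [Module R N]
    (hM : IsTorsion R M) : IsTorsion R (M →ₗ[R] N) := fun {φ} => by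
  obtain ⟨a, ha, haM⟩ := exists_mem_nonZeroDivisors_forall_smul_eq_zero hM
  refine ⟨⟨a, ha⟩, LinearMap.ext fun m => ?_⟩
  calc a • φ m = φ (a • m) := (map_smul φ a m).symm
    _ = 0 := by rw [haM, map_zero]

variable {K : Type*} [Field K] [Algebra R K] [FaithfulSMul R K]

theorem finite_linearMap_fractionQuotient [Module.Finite R M] [IsNoetherianRing R]
    (hM : IsTorsion R M) : Module.Finite R (M →ₗ[R] FractionQuotient R K) := by
  have := (algebraMap R K).domain_nontrivial
  obtain ⟨a, ha, haM⟩ := exists_mem_nonZeroDivisors_forall_smul_eq_zero hM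
  obtain ⟨n, v, hv⟩ := Module.Finite.exists_fin (R := R) (M := M)
  let T := Submodule.torsionBy R (FractionQuotient R K) a
  have : Module.Finite R T := Module.Finite.iff_fg.2
    ⟨{_}, by
      rw [Finset.coe_singleton]
      exact (FractionQuotient.torsionBy_eq_span (nonZeroDivisors.ne_zero ha)).symm⟩
  let evalGenerators : (M →ₗ[R] FractionQuotient R K) →ₗ[R] (Fin n → T) :=
    LinearMap.pi fun i => LinearMap.codRestrict T (LinearMap.applyₗ (v i)) fun φ => by
      rw [Submodule.mem_torsionBy_iff, LinearMap.applyₗ_apply_apply, ← map_smul, haM, map_zero]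
  refine Module.Finite.of_injective evalGenerators fun φ ψ h => LinearMap.ext_on hv ?_
  rintro _ ⟨i, rfl⟩
  exact congrArg Subtype.val (congrFun h i)

theorem surjective_bidualEval [Module.Finite R M] (hE : Baer R (FractionQuotient R K))
    (hM : IsTorsion R M) : Function.Surjective (bidualEval R K M) := by
  intro Φ
  have := (algebraMap R K).domain_nontrivial
  obtain ⟨a, ha, haM⟩ := exists_mem_nonZeroDivisors_forall_smul_eq_zero hM
  obtain ⟨n, v, hv⟩ := Module.Finite.exists_fin (R := R) (M := M)
  let evalGenerators : (M →ₗ[R] FractionQuotient R K) →ₗ[R] (Fin n → FractionQuotient R K) :=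
    LinearMap.pi fun i => LinearMap.applyₗ (v i)
  have hinj : Function.Injective evalGenerators := fun φ ψ h => LinearMap.ext_on hv <| by
    rintro _ ⟨i, rfl⟩
    exact congrFun h i
  obtain ⟨Ψ, hΨ⟩ := hE.extension_property evalGenerators hinj Φ
  obtain ⟨l, hl⟩ := FractionQuotient.exists_apply_eq_sum_smul (nonZeroDivisors.ne_zero ha) Ψ
  refine ⟨∑ i, l i • v i, LinearMap.ext fun φ => ?_⟩
  have haφ : a • evalGenerators φ = 0 := funext fun i => by
    rw [Pi.smul_apply, LinearMap.pi_apply, LinearMap.applyₗ_apply_apply, ← map_smul, haM, map_zero,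
      Pi.zero_apply]
  calc φ (∑ i, l i • v i) = ∑ i, l i • evalGenerators φ i := by
        simp only [map_sum, map_smul, evalGenerators, LinearMap.pi_apply,
          LinearMap.applyₗ_apply_apply]
    _ = Ψ (evalGenerators φ) := (hl _ haφ).symm
    _ = Φ φ := LinearMap.congr_fun hΨ φ

theorem injective_bidualEval [IsPrincipalIdealRing R] (hM : IsTorsion R M) :
    Function.Injective (bidualEval R K M) := by
  rw [injective_iff_map_eq_zero]
  intro m hm
  obtain ⟨b, hb⟩ :=
    (IsPrincipalIdealRing.principal (LinearMap.ker (LinearMap.toSpanSingleton R M m))).principal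
  have smul_eq_zero_iff (r : R) : r • m = 0 ↔ ∃ c : R, c • b = r := by
    rw [← Submodule.mem_span_singleton, ← hb, LinearMap.mem_ker, LinearMap.toSpanSingleton_apply]
  have hb0 : algebraMap R K b ≠ 0 := by
    obtain ⟨a, ha⟩ := @hM m
    obtain ⟨c, hc⟩ := (smul_eq_zero_iff a).1 ha
    have := (algebraMap R K).domain_nontrivial
    rw [Ne, FaithfulSMul.algebraMap_eq_zero_iff R K]
    rintro rfl
    exact nonZeroDivisors.coe_ne_zero a (hc.symm.trans (smul_zero c))
  have hker : LinearMap.ker (LinearMap.toSpanSingleton R M m) ≤ LinearMap.ker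
      (LinearMap.toSpanSingleton R (FractionQuotient R K)
        (Submodule.Quotient.mk (algebraMap R K b)⁻¹)) := by
    rw [hb, Submodule.span_singleton_le_iff_mem, LinearMap.mem_ker,
      LinearMap.toSpanSingleton_apply, ← Submodule.Quotient.mk_smul, Algebra.smul_def,
      mul_inv_cancel₀ hb0, FractionQuotient.mk_eq_zero_iff]
    exact ⟨1, map_one _⟩
  obtain ⟨φ, hφ⟩ := exists_comp_eq_of_ker_le_ker (baer_fractionQuotient K) hker
  have hφm : (Submodule.Quotient.mk (algebraMap R K b)⁻¹ : FractionQuotient R K) = 0 := by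
    have h1 := LinearMap.congr_fun hφ 1
    rw [LinearMap.comp_apply, LinearMap.toSpanSingleton_apply_one,
      LinearMap.toSpanSingleton_apply_one] at h1
    exact h1.symm.trans (LinearMap.congr_fun hm φ)
  obtain ⟨r, hr⟩ := FractionQuotient.mk_eq_zero_iff.1 hφm
  rw [← one_smul R m, smul_eq_zero_iff]
  refine ⟨r, FaithfulSMul.algebraMap_injective R K ?_⟩
  rw [smul_eq_mul, map_mul, hr, inv_mul_cancel₀ hb0, map_one]

theorem bijective_bidualEval [IsPrincipalIdealRing R] [Module.Finite R M] (hM : IsTorsion R M) :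
    Function.Bijective (bidualEval R K M) :=
  ⟨injective_bidualEval hM, surjective_bidualEval (baer_fractionQuotient K) hM⟩

end Bidual

/-- The cohomology at the middle term of a complex `A → B → C` of modules. -/
abbrev kerModRange {R A B C : Type*} [CommRing R] [AddCommGroup A] [Module R A] [AddCommGroup B]
    [Module R B] [AddCommGroup C] [Module R C] (f : A →ₗ[R] B) (g : B →ₗ[R] C) :=
  LinearMap.ker g ⧸ (LinearMap.range f).submoduleOf (LinearMap.ker g)

/-- The isomorphism on cohomology at the middle term induced by an isomorphism of complexes. -/
noncomputable def kerModRangeCongr {R A B C A' B' C' : Type*} [CommRing R]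
    [AddCommGroup A] [Module R A] [AddCommGroup B] [Module R B] [AddCommGroup C] [Module R C]
    [AddCommGroup A'] [Module R A'] [AddCommGroup B'] [Module R B'] [AddCommGroup C'] [Module R C']
    {f : A →ₗ[R] B} {g : B →ₗ[R] C} {f' : A' →ₗ[R] B'} {g' : B' →ₗ[R] C'}
    (eA : A ≃ₗ[R] A') (eB : B ≃ₗ[R] B') (eC : C ≃ₗ[R] C') (hf : ∀ a, eB (f a) = f' (eA a))
    (hg : ∀ b, eC (g b) = g' (eB b)) : kerModRange f g ≃ₗ[R] kerModRange f' g' := by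
  have hker : (LinearMap.ker g).map eB.toLinearMap = LinearMap.ker g' := by
    ext b
    rw [Submodule.mem_map_equiv, LinearMap.mem_ker, LinearMap.mem_ker, ← eC.map_eq_zero_iff, hg,
      eB.apply_symm_apply]
  refine Submodule.Quotient.equiv _ _ (eB.ofSubmodules _ _ hker) ?_
  ext ⟨b, hb⟩
  rw [Submodule.mem_map_equiv]
  constructor
  · rintro ⟨a, ha⟩
    exact ⟨eA a, by rw [← hf, ha]; exact eB.apply_symm_apply b⟩
  · rintro ⟨a, ha⟩
    refine ⟨eA.symm a, eB.injective ?_⟩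
    rw [hf, eA.apply_symm_apply, ha]
    exact (eB.apply_symm_apply b).symm

section DimensionShifting

variable {R : Type*} [CommRing R] {L J E N P₀ P₁ P₂ : Type*}
  [AddCommGroup L] [Module R L] [AddCommGroup J] [Module R J] [AddCommGroup E] [Module R E]
  [AddCommGroup N] [Module R N] [AddCommGroup P₀] [Module R P₀] [AddCommGroup P₁] [Module R P₁]
  [AddCommGroup P₂] [Module R P₂]

theorem exact_compRight {i : L →ₗ[R] J} {q : J →ₗ[R] E} (hiq : Function.Exact i q)
    (hi : Function.Injective i) :
    Function.Exact (LinearMap.compRight R (M := N) i) (LinearMap.compRight R q) := by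
  intro φ
  constructor
  · intro hφ
    have hrange (x : N) : φ x ∈ LinearMap.range i := (hiq _).1 (LinearMap.congr_fun hφ x)
    refine ⟨(LinearEquiv.ofInjective i hi).symm ∘ₗ φ.codRestrict _ hrange, ?_⟩
    exact LinearMap.ext fun x => congrArg Subtype.val
      ((LinearEquiv.ofInjective i hi).apply_symm_apply ⟨φ x, hrange x⟩)
  · rintro ⟨ψ, rfl⟩
    exact LinearMap.ext fun x => hiq.apply_apply_eq_zero (ψ x)

/-- For an inclusion `i : L → J` and a presentation `d₁ : P₁ → P₀`, the pairs consisting of a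
`1`-cochain `c : P₁ → L` and a `0`-cochain `θ : P₀ → J` whose coboundary is `i ∘ c`. They form the
correspondence underlying the connecting map `Hom(N, J/L) → Ext¹(N, L)`. -/
def boundingPairs (i : L →ₗ[R] J) (d₁ : P₁ →ₗ[R] P₀) :
    Submodule R ((P₀ →ₗ[R] J) × (P₁ →ₗ[R] L)) :=
  LinearMap.eqLocus (LinearMap.lcomp R J d₁ ∘ₗ LinearMap.fst R _ _)
    (LinearMap.compRight R i ∘ₗ LinearMap.snd R _ _)

theorem mem_boundingPairs {i : L →ₗ[R] J} {d₁ : P₁ →ₗ[R] P₀} {w : (P₀ →ₗ[R] J) × (P₁ →ₗ[R] L)} :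
    w ∈ boundingPairs i d₁ ↔ w.1 ∘ₗ d₁ = i ∘ₗ w.2 :=
  Iff.rfl

theorem map_fst_boundingPairs [Module.Projective R P₀] {i : L →ₗ[R] J} {q : J →ₗ[R] E}
    {d₁ : P₁ →ₗ[R] P₀} (hiq : Function.Exact i q) (hi : Function.Injective i)
    (hq : Function.Surjective q) :
    (boundingPairs i d₁).map (LinearMap.compRight R q ∘ₗ LinearMap.fst R _ _) =
      LinearMap.ker (LinearMap.lcomp R E d₁) := by
  ext χ
  constructor
  · rintro ⟨⟨θ, c⟩, hw, rfl⟩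
    have hw : θ ∘ₗ d₁ = i ∘ₗ c := hw
    change q ∘ₗ θ ∘ₗ d₁ = 0
    rw [hw, ← LinearMap.comp_assoc, hiq.linearMap_comp_eq_zero, LinearMap.zero_comp]
  · intro hχ
    obtain ⟨θ, rfl⟩ := Module.projective_lifting_property q χ hq
    obtain ⟨c, hc⟩ := (exact_compRight hiq hi (θ ∘ₗ d₁)).1 hχ
    exact ⟨(θ, c), hc.symm, rfl⟩

theorem map_snd_boundingPairs {i : L →ₗ[R] J} {d₂ : P₂ →ₗ[R] P₁} {d₁ : P₁ →ₗ[R] P₀}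
    (hi : Function.Injective i) (hJ : Module.Baer R J) (hd : Function.Exact d₂ d₁) :
    (boundingPairs i d₁).map (LinearMap.snd R _ _) = LinearMap.ker (LinearMap.lcomp R L d₂) := by
  ext c
  constructor
  · rintro ⟨⟨θ, c⟩, hw, rfl⟩
    have hw : θ ∘ₗ d₁ = i ∘ₗ c := hw
    refine LinearMap.ext fun x => hi ?_
    calc i (c (d₂ x)) = θ (d₁ (d₂ x)) := (LinearMap.congr_fun hw _).symm
      _ = i 0 := by rw [hd.apply_apply_eq_zero, map_zero, map_zero]
  · intro hc
    have hker : LinearMap.ker d₁ ≤ LinearMap.ker (i ∘ₗ c) := by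
      intro y hy
      obtain ⟨x, rfl⟩ := (hd y).1 hy
      exact (congrArg i (LinearMap.congr_fun hc x)).trans (map_zero i)
    obtain ⟨θ, hθ⟩ := exists_comp_eq_of_ker_le_ker hJ hker
    exact ⟨(θ, c), hθ, rfl⟩

theorem comp_fst_eq_zero_iff_snd_mem_range {i : L →ₗ[R] J} {q : J →ₗ[R] E} {d₁ : P₁ →ₗ[R] P₀}
    {ε : P₀ →ₗ[R] N} (hiq : Function.Exact i q) (hi : Function.Injective i)
    (hdε : Function.Exact d₁ ε) (hε : Function.Surjective ε) (hNJ : Subsingleton (N →ₗ[R] J))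
    {w : (P₀ →ₗ[R] J) × (P₁ →ₗ[R] L)} (hw : w ∈ boundingPairs i d₁) :
    q ∘ₗ w.1 = 0 ↔ w.2 ∈ LinearMap.range (LinearMap.lcomp R L d₁) := by
  obtain ⟨θ, c⟩ := w
  rw [mem_boundingPairs] at hw
  constructor
  · intro hθ
    obtain ⟨ψ, rfl⟩ := (exact_compRight hiq hi θ).1 hθ
    exact ⟨ψ, hi.injective_linearMapComp_left hw⟩
  · rintro ⟨ψ, rfl⟩
    have hdiff : (θ - i ∘ₗ ψ) ∘ₗ d₁ = 0 := by
      rw [LinearMap.sub_comp, hw, sub_eq_zero]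
      rfl
    obtain ⟨χ, hχ⟩ :=
      (LinearMap.exact_lcomp_of_exact_of_surjective _ hdε hε (θ - i ∘ₗ ψ)).1 hdiff
    rw [Subsingleton.elim χ 0, map_zero, eq_comm, sub_eq_zero] at hχ
    rw [hχ, ← LinearMap.comp_assoc, hiq.linearMap_comp_eq_zero, LinearMap.zero_comp]

/-- Dimension shifting along `0 → L → J → E → 0` with `J` injective and `Hom(N, J) = 0`: the group
`Ext¹(N, L)`, computed from the projective resolution `P₂ → P₁ → P₀ → N`, is `Hom(N, E)`. -/
noncomputable def cocycleQuotientEquiv [Module.Projective R P₀] {i : L →ₗ[R] J} {q : J →ₗ[R] E}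
    {d₂ : P₂ →ₗ[R] P₁} {d₁ : P₁ →ₗ[R] P₀} {ε : P₀ →ₗ[R] N} (hiq : Function.Exact i q)
    (hi : Function.Injective i) (hq : Function.Surjective q) (hJ : Module.Baer R J)
    (hd : Function.Exact d₂ d₁) (hdε : Function.Exact d₁ ε) (hε : Function.Surjective ε)
    (hNJ : Subsingleton (N →ₗ[R] J)) :
    kerModRange (LinearMap.lcomp R L d₁) (LinearMap.lcomp R L d₂) ≃ₗ[R] (N →ₗ[R] E) := by
  let W := boundingPairs i d₁
  let Z := LinearMap.ker (LinearMap.lcomp R L d₂)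
  let B := (LinearMap.range (LinearMap.lcomp R L d₁)).submoduleOf Z
  have hW : W.map (LinearMap.snd R _ _) = Z := map_snd_boundingPairs hi hJ hd
  let β : W →ₗ[R] Z ⧸ B := B.mkQ ∘ₗ (LinearMap.snd R _ _).restrict fun w hw => by
    rw [← hW]
    exact ⟨w, hw, rfl⟩
  let α : W →ₗ[R] (P₀ →ₗ[R] E) := (LinearMap.compRight R q ∘ₗ LinearMap.fst R _ _) ∘ₗ W.subtype
  have hβ : Function.Surjective β := B.mkQ_surjective.comp <| by
    rintro ⟨c, hc⟩
    rw [← hW] at hc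
    obtain ⟨w, hw, rfl⟩ := hc
    exact ⟨⟨w, hw⟩, rfl⟩
  have hker : LinearMap.ker β = LinearMap.ker α := by
    ext w
    exact (Submodule.Quotient.mk_eq_zero B).trans
      (comp_fst_eq_zero_iff_snd_mem_range hiq hi hdε hε hNJ w.2).symm
  have hα : LinearMap.range α = LinearMap.range (LinearMap.lcomp R E ε) := by
    rw [LinearMap.range_comp, Submodule.range_subtype, map_fst_boundingPairs hiq hi hq,
      (LinearMap.exact_lcomp_of_exact_of_surjective _ hdε hε).linearMap_ker_eq]
  exact (β.quotKerEquivOfSurjective hβ).symm ≪≫ₗ Submodule.quotEquivOfEq _ _ hker ≪≫ₗ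
    α.quotKerEquivRange ≪≫ₗ LinearEquiv.ofEq _ _ hα ≪≫ₗ
    (LinearEquiv.ofInjective _ (LinearMap.lcomp_injective_of_surjective ε hε)).symm

end DimensionShifting

section Ext

/-- The homology of a short complex of modules, as the kernel modulo the range. -/
noncomputable def homologyLinearEquiv {R : Type} [CommRing R] (S : ShortComplex (ModuleCat R)) :
    S.homology ≃ₗ[R] kerModRange S.f.hom S.g.hom :=
  S.moduleCatHomologyIso.toLinearEquiv ≪≫ₗ Submodule.quotEquivOfEq _ _ (by
    ext ⟨c, hc⟩
    exact exists_congr fun _ => Subtype.ext_iff)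

variable {R : Type} [CommRing R] {N : Type} [AddCommGroup N] [Module R N]

/-- `Extⁿ⁺¹(N, L)` as cocycles modulo coboundaries of a projective resolution. -/
noncomputable def extModuleSuccEquiv (Pr : ProjectiveResolution (ModuleCat.of R N)) (L : Type)
    [AddCommGroup L] [Module R L] (n : ℕ) :
    extModule R N L (n + 1) ≃ₗ[R] kerModRange
      (LinearMap.lcomp R L (Pr.complex.d (n + 1) n).hom)
      (LinearMap.lcomp R L (Pr.complex.d (n + 2) (n + 1)).hom) :=
  let C := Pr.complex.linearYonedaObj R (ModuleCat.of R L)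
  let toHom (k : ℕ) : C.X k ≃ₗ[R] (Pr.complex.X k →ₗ[R] L) :=
    ModuleCat.homLinearEquiv (S := R) (M := Pr.complex.X k) (N := ModuleCat.of R L)
  (Pr.isoExt (n + 1) (ModuleCat.of R L) ≪≫
    ShortComplex.homologyMapIso (C.isoSc' n (n + 1) (n + 2) (by simp) (by simp))).toLinearEquiv ≪≫ₗ
    homologyLinearEquiv _ ≪≫ₗ
    kerModRangeCongr (toHom n) (toHom (n + 1)) (toHom (n + 2)) (fun _ => rfl) (fun _ => rfl)

theorem nonempty_extModule_one_equiv {L J E : Type} [AddCommGroup L] [Module R L] [AddCommGroup J]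
    [Module R J] [AddCommGroup E] [Module R E] {i : L →ₗ[R] J} {q : J →ₗ[R] E}
    (hiq : Function.Exact i q) (hi : Function.Injective i) (hq : Function.Surjective q)
    (hJ : Module.Baer R J) (hNJ : Subsingleton (N →ₗ[R] J)) :
    Nonempty (extModule R N L 1 ≃ₗ[R] (N →ₗ[R] E)) := by
  let Pr := ProjectiveResolution.of (ModuleCat.of R N)
  have : Module.Projective R (Pr.complex.X 0) :=
    (IsProjective.iff_projective (Pr.complex.X 0)).2 (Pr.projective 0)
  have hd : Function.Exact (Pr.complex.d 2 1).hom (Pr.complex.d 1 0).hom :=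
    (ShortComplex.ShortExact.moduleCat_exact_iff_function_exact _).1 (Pr.exact_succ 0)
  have hdε : Function.Exact (Pr.complex.d 1 0).hom (Pr.π.f 0).hom :=
    (ShortComplex.ShortExact.moduleCat_exact_iff_function_exact _).1 Pr.exact₀
  have hε : Function.Surjective (Pr.π.f 0).hom :=
    (ModuleCat.epi_iff_surjective (Pr.π.f 0)).1 inferInstance
  exact ⟨extModuleSuccEquiv Pr L 0 ≪≫ₗ cocycleQuotientEquiv hiq hi hq hJ hd hdε hε hNJ⟩

theorem nonempty_extModule_one_equiv_fractionQuotient (K : Type) [Field K] [Algebra R K]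
    [FaithfulSMul R K] (hN : Module.IsTorsion R N) :
    Nonempty (extModule R N R 1 ≃ₗ[R] (N →ₗ[R] FractionQuotient R K)) := by
  refine nonempty_extModule_one_equiv (i := Algebra.linearMap R K) (q := Submodule.mkQ _) ?_
    (FaithfulSMul.algebraMap_injective R K) (Submodule.mkQ_surjective _) (baer_of_faithfulSMul K) ?_
  · rw [LinearMap.exact_iff, Submodule.ker_mkQ, Submodule.one_eq_range]
  · refine subsingleton_of_forall_eq 0 fun θ => LinearMap.ext fun x => ?_
    have := (algebraMap R K).domain_nontrivial
    obtain ⟨a, ha⟩ := @hN x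
    have haθ : algebraMap R K a * θ x = 0 := by
      rw [← Algebra.smul_def, ← map_smul]
      exact (congrArg θ ha).trans (map_zero θ)
    exact (mul_eq_zero.1 haθ).resolve_left
      ((FaithfulSMul.algebraMap_eq_zero_iff R K).not.2 (nonZeroDivisors.coe_ne_zero a))

end Ext

section LocalizedSquare

variable {R : Type*} [CommRing R] (S : Submonoid R)

variable {M N M' N' : Type*} [AddCommGroup M] [Module R M] [AddCommGroup N] [Module R N]
  [AddCommGroup M'] [Module R M'] [AddCommGroup N'] [Module R N']
  {f : M →ₗ[R] M'} [IsLocalizedModule S f] {g : N →ₗ[R] N'} {h : M →ₗ[R] N} {h' : M' →ₗ[R] N'}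

theorem subsingleton_localizedModule_ker (hcomm : g ∘ₗ h = h' ∘ₗ f)
    (hh' : Function.Injective h') : Subsingleton (LocalizedModule S (LinearMap.ker h)) := by
  rw [LocalizedModule.subsingleton_iff]
  rintro ⟨m, hm⟩
  have hfm : f m = 0 := hh' <| by
    rw [map_zero, ← LinearMap.comp_apply, ← hcomm, LinearMap.comp_apply, hm, map_zero]
  obtain ⟨s, hs⟩ := (IsLocalizedModule.eq_zero_iff S f).1 hfm
  exact ⟨s, s.2, Subtype.ext hs⟩

theorem subsingleton_localizedModule_coker [IsLocalizedModule S g] (hcomm : g ∘ₗ h = h' ∘ₗ f)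
    (hh' : Function.Surjective h') : Subsingleton (LocalizedModule S (N ⧸ LinearMap.range h)) := by
  rw [LocalizedModule.subsingleton_iff]
  intro y
  obtain ⟨n, rfl⟩ := Submodule.Quotient.mk_surjective _ y
  obtain ⟨m', hm'⟩ := hh' (g n)
  obtain ⟨⟨m, s⟩, hs⟩ := IsLocalizedModule.surj S f m'
  have hg : g (h m) = g (s • n) := by
    rw [← LinearMap.comp_apply, hcomm, LinearMap.comp_apply, ← hs]
    simp only [Submonoid.smul_def, map_smul, hm']
  obtain ⟨t, ht⟩ := IsLocalizedModule.exists_of_eq (S := S) hg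
  refine ⟨t * s, mul_mem t.2 s.2, ?_⟩
  rw [← Submodule.Quotient.mk_smul, Submodule.Quotient.mk_eq_zero]
  refine ⟨(t : R) • m, ?_⟩
  rw [map_smul, mul_smul]
  exact ht

end LocalizedSquare

section LocalizedBidual

open scoped TensorProduct

theorem isTorsion_tensorProduct {R A M : Type*} [CommRing R] [CommRing A] [IsDomain A]
    [Algebra R A] [FaithfulSMul R A] [AddCommGroup M] [Module R M] (hM : Module.IsTorsion R M) :
    Module.IsTorsion A (TensorProduct R A M) := by
  have := (algebraMap R A).domain_nontrivial
  refine fun {x} => ?_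
  induction x with
  | zero => exact ⟨1, smul_zero _⟩
  | tmul r m =>
    obtain ⟨a, ha⟩ := @hM m
    have haA : algebraMap R A a ≠ 0 :=
      (FaithfulSMul.algebraMap_eq_zero_iff R A).not.2 (nonZeroDivisors.coe_ne_zero a)
    refine ⟨⟨_, mem_nonZeroDivisors_of_ne_zero haA⟩, ?_⟩
    change algebraMap R A a • r ⊗ₜ[R] m = 0
    rw [algebraMap_smul, ← TensorProduct.tmul_smul]
    exact (congrArg (r ⊗ₜ[R] ·) ha).trans (TensorProduct.tmul_zero M r)
  | add x y hx hy =>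
    obtain ⟨a, ha⟩ := hx
    obtain ⟨b, hb⟩ := hy
    refine ⟨a * b, ?_⟩
    rw [smul_add, mul_smul, mul_smul, hb, smul_comm, ha, smul_zero, smul_zero, add_zero]

variable {R : Type*} [CommRing R] (S : Submonoid R) (A : Type*) [CommRing A] [Algebra R A]
  [IsLocalization S A]

theorem mapExtendScalars_applyₗ {M M' E E' : Type*} [AddCommGroup M] [Module R M]
    [AddCommGroup M'] [Module R M'] [Module A M'] [IsScalarTower R A M']
    [AddCommGroup E] [Module R E] [AddCommGroup E'] [Module R E'] [Module A E']
    [IsScalarTower R A E'] (f : M →ₗ[R] M') [IsLocalizedModule S f] (g : E →ₗ[R] E')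
    [IsLocalizedModule S g] [IsLocalizedModule S (IsLocalizedModule.mapExtendScalars S f g A)]
    (m : M) :
    IsLocalizedModule.mapExtendScalars S (IsLocalizedModule.mapExtendScalars S f g A) g A
        (LinearMap.applyₗ m) = LinearMap.applyₗ (f m) := by
  refine LinearMap.restrictScalars_injective R <|
    IsLocalizedModule.linearMap_ext S (IsLocalizedModule.mapExtendScalars S f g A) g ?_
  ext φ
  simp

variable (K : Type*) [Field K] [Algebra R K] [Algebra A K] [IsScalarTower R A K]

theorem localized'_one_eq_one [IsLocalizedModule S (LinearMap.id : K →ₗ[R] K)] :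
    (1 : Submodule R K).localized' A S LinearMap.id = 1 := by
  rw [Submodule.one_eq_span, Submodule.localized'_span, Submodule.one_eq_span, LinearMap.id_coe,
    Set.image_id]

/-- The localization map `K/R → K/S⁻¹R`. -/
noncomputable def fractionQuotientMap [IsLocalizedModule S (LinearMap.id : K →ₗ[R] K)] :
    FractionQuotient R K →ₗ[R] FractionQuotient A K :=
  ((Submodule.quotEquivOfEq _ _ (localized'_one_eq_one S A K)).restrictScalars R).toLinearMap ∘ₗ
    (1 : Submodule R K).toLocalizedQuotient' A S LinearMap.id

instance [IsLocalizedModule S (LinearMap.id : K →ₗ[R] K)] :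
    IsLocalizedModule S (fractionQuotientMap S A K) :=
  IsLocalizedModule.of_linearEquiv _ _ _

variable {K}

theorem subsingleton_localizedModule_bidualEval [IsNoetherianRing R] [IsPrincipalIdealRing A]
    [FaithfulSMul R A] [FaithfulSMul A K] {M : Type*} [AddCommGroup M] [Module R M]
    [Module.Finite R M] (hM : Module.IsTorsion R M) :
    Subsingleton (LocalizedModule S (LinearMap.ker (bidualEval R K M))) ∧
      Subsingleton (LocalizedModule S (_ ⧸ LinearMap.range (bidualEval R K M))) := by
  have := isLocalizedModule_id S K A
  have : FaithfulSMul R K := .trans R A K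
  have : IsDomain A := (FaithfulSMul.algebraMap_injective A K).isDomain (algebraMap A K)
  let f : M →ₗ[R] TensorProduct R A M := TensorProduct.mk R A M 1
  let g := fractionQuotientMap S A K
  have := Module.finitePresentation_of_finite R M
  have := finite_linearMap_fractionQuotient (K := K) hM
  have := Module.finitePresentation_of_finite R (M →ₗ[R] FractionQuotient R K)
  have hbij := bijective_bidualEval (K := K) (isTorsion_tensorProduct (A := A) hM)
  have hcomm :
      IsLocalizedModule.mapExtendScalars S (IsLocalizedModule.mapExtendScalars S f g A) g A ∘ₗ
        bidualEval R K M = (bidualEval A K (TensorProduct R A M)).restrictScalars R ∘ₗ f :=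
    LinearMap.ext (mapExtendScalars_applyₗ S A f g)
  exact ⟨subsingleton_localizedModule_ker S hcomm hbij.injective,
    subsingleton_localizedModule_coker S hcomm hbij.surjective⟩

end LocalizedBidual

section PseudoNull

theorem isPrincipalIdealRing_of_isLocalization_atPrime {R : Type*} [CommRing R] [IsDomain R]
    [IsNoetherianRing R] [IsIntegrallyClosed R] (P : Ideal R) [P.IsPrime] (hP : P.height ≤ 1)
    (A : Type*) [CommRing A] [Algebra R A] [IsLocalization.AtPrime A P] :
    IsPrincipalIdealRing A := by
  have hle : P.primeCompl ≤ nonZeroDivisors R := P.primeCompl_le_nonZeroDivisors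
  have : IsDomain A := IsLocalization.isDomain_of_le_nonZeroDivisors A hle
  have : IsNoetherianRing A := IsLocalization.isNoetherianRing P.primeCompl A inferInstance
  have : IsIntegrallyClosed A := isIntegrallyClosed_of_isLocalization (R := R) A P.primeCompl hle
  have : IsLocalRing A := IsLocalization.AtPrime.isLocalRing A P
  have hdim : Ring.KrullDimLE 1 A := by
    rw [Ring.krullDimLE_iff, IsLocalization.AtPrime.ringKrullDim_eq_height P A]
    exact_mod_cast hP
  have : Ring.DimensionLEOne A :=
    ⟨fun {Q} hQ0 hQ => Ring.krullDimLE_one_iff_of_noZeroDivisors.1 hdim Q hQ0 hQ⟩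
  have : IsDedekindDomain A := { }
  exact IsDedekindDomain.isPrincipalIdealRing A

theorem IsPseudoNull.of_linearEquiv {R M N : Type} [CommRing R] [AddCommGroup M] [Module R M]
    [AddCommGroup N] [Module R N] (hM : IsPseudoNull R M) (e : M ≃ₗ[R] N) : IsPseudoNull R N := by
  intro P hP hht
  rw [LocalizedModule.subsingleton_iff]
  intro n
  obtain ⟨s, hs, hsn⟩ := LocalizedModule.subsingleton_iff.1 (hM P hP hht) (e.symm n)
  exact ⟨s, hs, by rwa [← map_smul, e.symm.map_eq_zero_iff] at hsn⟩

theorem isPseudoNull_bidualEval {R : Type} [CommRing R] [IsDomain R]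
    [IsNoetherianRing R] [IsIntegrallyClosed R] (K : Type) [Field K] [Algebra R K]
    [IsFractionRing R K] {M : Type} [AddCommGroup M] [Module R M] [Module.Finite R M]
    (hM : Module.IsTorsion R M) :
    IsPseudoNull R (LinearMap.ker (bidualEval R K M)) ∧
      IsPseudoNull R (_ ⧸ LinearMap.range (bidualEval R K M)) := by
  suffices hloc : ∀ (P : Ideal R) [P.IsPrime], P.height ≤ 1 →
      Subsingleton (LocalizedModule P.primeCompl (LinearMap.ker (bidualEval R K M))) ∧
        Subsingleton (LocalizedModule P.primeCompl (_ ⧸ LinearMap.range (bidualEval R K M))) from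
    ⟨fun P hP hht => (hloc P ((PrimeSpectrum.height_eq_orderHeight ⟨P, hP⟩).trans_le hht)).1,
      fun P hP hht => (hloc P ((PrimeSpectrum.height_eq_orderHeight ⟨P, hP⟩).trans_le hht)).2⟩
  intro P _ hht
  let A := Localization.AtPrime P
  have hle : P.primeCompl ≤ nonZeroDivisors R := P.primeCompl_le_nonZeroDivisors
  let : Algebra A K := IsLocalization.localizationAlgebraOfSubmonoidLe A K _ _ hle
  have : IsScalarTower R A K :=
    IsLocalization.localization_isScalarTower_of_submonoid_le A K _ _ hle
  have : IsFractionRing A K :=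
    IsFractionRing.isFractionRing_of_isDomain_of_isLocalization P.primeCompl A K
  have : IsPrincipalIdealRing A := isPrincipalIdealRing_of_isLocalization_atPrime P hht A
  exact subsingleton_localizedModule_bidualEval P.primeCompl A hM

end PseudoNull

section PowerSeriesNormal

open PowerSeries

theorem isIntegrallyClosed_of_isAlmostIntegral_mem_range {A B : Type*} [CommRing A] [IsDomain A]
    [CommRing B] [IsDomain B] [IsIntegrallyClosed B] [Algebra A B] [FaithfulSMul A B]
    (h : ∀ b : B, IsAlmostIntegral A b → b ∈ (algebraMap A B).range) : IsIntegrallyClosed A := by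
  refine (isIntegrallyClosed_iff (FractionRing A)).2 fun {x} hx => ?_
  obtain ⟨⟨f, g⟩, hfg⟩ := IsLocalization.surj (nonZeroDivisors A) x
  let φ : FractionRing A →ₐ[A] FractionRing B :=
    IsFractionRing.liftAlgHom (g := Algebra.ofId A (FractionRing B))
      (FaithfulSMul.algebraMap_injective A (FractionRing B))
  obtain ⟨b, hb⟩ := (isIntegrallyClosed_iff (FractionRing B)).1 ‹_› ((hx.map φ).tower_top (A := B))
  have hbint : IsIntegral A b := by
    rw [← isIntegral_algebraMap_iff (IsFractionRing.injective B (FractionRing B)), hb]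
    exact hx.map φ
  have hgb : (g : A) • b = algebraMap A B f := by
    apply IsFractionRing.injective B (FractionRing B)
    rw [Algebra.smul_def, map_mul, hb, ← IsScalarTower.algebraMap_apply,
      ← IsScalarTower.algebraMap_apply, ← φ.commutes, ← φ.commutes, ← map_mul, mul_comm, hfg]
  obtain ⟨a, rfl⟩ := h b (hbint.isAlmostIntegral_of_exists_smul_mem_range ⟨g, g.2, f, hgb.symm⟩)
  refine ⟨a, φ.toRingHom.injective ?_⟩
  change φ (algebraMap A _ a) = φ x
  rw [φ.commutes, ← hb, ← IsScalarTower.algebraMap_apply]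

variable {R S : Type*} [CommRing R] [CommRing S] [Algebra R S]

theorem isAlmostIntegral_monomial {c : S} (hc : IsAlmostIntegral R c) (i : ℕ) :
    IsAlmostIntegral R⟦X⟧ (monomial i c) := by
  obtain ⟨r, hr, hrc⟩ := hc
  refine ⟨C r, MvPowerSeries.mem_nonZeroDivisors_of_constantCoeff hr, fun n => ?_⟩
  obtain ⟨s, hs⟩ := hrc n
  have hs' : algebraMap R S s = algebraMap R S r * c ^ n := hs.trans (Algebra.smul_def _ _)
  refine ⟨monomial (n * i) s, ?_⟩
  rw [Algebra.smul_def, monomial_pow]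
  ext j
  simp only [algebraMap_apply'', map_C, coeff_C_mul, coeff_map, coeff_monomial]
  split_ifs
  · exact hs'
  · rw [map_zero, mul_zero]

theorem isAlmostIntegral_coeff_of_X_pow_dvd [IsDomain R] {x : S⟦X⟧}
    (hx : IsAlmostIntegral R⟦X⟧ x) {m : ℕ} (hm : X ^ m ∣ x) : IsAlmostIntegral R (coeff m x) := by
  obtain ⟨r, hr, hrx⟩ := hx
  obtain ⟨y, rfl⟩ := hm
  have hr0 : coeff r.order.toNat r ≠ 0 := coeff_order (nonZeroDivisors.ne_zero hr)
  refine ⟨_, mem_nonZeroDivisors_of_ne_zero hr0, fun n => ?_⟩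
  obtain ⟨q, hq⟩ := hrx n
  refine ⟨coeff (r.order.toNat + m * n) q, ?_⟩
  let r' := divXPowOrder r
  have hfactor : map (algebraMap R S) q =
      X ^ (r.order.toNat + m * n) * (map (algebraMap R S) r' * y ^ n) := by
    calc map (algebraMap R S) q = map (algebraMap R S) r * (X ^ m * y) ^ n :=
          hq.trans (Algebra.smul_def _ _)
      _ = map (algebraMap R S) (X ^ r.order.toNat * r') * (X ^ m * y) ^ n := by
          rw [X_pow_order_mul_divXPowOrder]
      _ = _ := by
          rw [map_mul, map_pow, map_X]
          ring
  have hr' : constantCoeff (map (algebraMap R S) r') =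
      algebraMap R S (coeff r.order.toNat r) := by
    rw [← coeff_zero_eq_constantCoeff_apply, coeff_map, coeff_zero_eq_constantCoeff_apply,
      constantCoeff_divXPowOrder]
  rw [← coeff_map, hfactor, coeff_X_pow_mul', if_pos le_rfl, Nat.sub_self, coeff_X_pow_mul',
    if_pos le_rfl, Nat.sub_self, coeff_zero_eq_constantCoeff_apply,
    coeff_zero_eq_constantCoeff_apply, map_mul, map_pow, hr', Algebra.smul_def]

theorem isAlmostIntegral_coeff [IsDomain R] {x : S⟦X⟧} (hx : IsAlmostIntegral R⟦X⟧ x) (m : ℕ) :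
    IsAlmostIntegral R (coeff m x) := by
  induction m using Nat.strong_induction_on with | h m ih =>
  let t : S⟦X⟧ := ∑ i ∈ Finset.range m, monomial i (coeff i x)
  have ht : IsAlmostIntegral R⟦X⟧ t := (completeIntegralClosure R⟦X⟧ S⟦X⟧).sum_mem
    fun i hi => isAlmostIntegral_monomial (ih i (Finset.mem_range.1 hi)) i
  have hcoeff (j : ℕ) : coeff j (x - t) = if j < m then 0 else coeff j x := by
    simp only [t, map_sub, map_sum, coeff_monomial, Finset.sum_ite_eq, Finset.mem_range]
    split_ifs
    · exact sub_self _
    · exact sub_zero _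
  have hdvd : X ^ m ∣ x - t := X_pow_dvd_iff.2 fun j hj => (hcoeff j).trans (if_pos hj)
  rw [← (hcoeff m).trans (if_neg (lt_irrefl m))]
  exact isAlmostIntegral_coeff_of_X_pow_dvd
    ((completeIntegralClosure R⟦X⟧ S⟦X⟧).sub_mem hx ht) hdvd

theorem isIntegrallyClosed_powerSeries [IsDomain R] [IsNoetherianRing R]
    [IsIntegrallyClosed R] : IsIntegrallyClosed R⟦X⟧ := by
  let K := FractionRing R
  have : FaithfulSMul R⟦X⟧ K⟦X⟧ := (faithfulSMul_iff_algebraMap_injective _ _).2 <|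
    map_injective _ (IsFractionRing.injective R K)
  refine isIntegrallyClosed_of_isAlmostIntegral_mem_range (B := K⟦X⟧) fun x hx => ?_
  choose c hc using fun m =>
    (isIntegrallyClosed_iff K).1 ‹_› (isAlmostIntegral_coeff hx m).isIntegral
  refine ⟨mk c, ext fun m => ?_⟩
  exact (coeff_map _ _ _).trans ((congrArg _ (coeff_mk m c)).trans (hc m))

theorem isIntegrallyClosed_mvPowerSeries (R : Type*) [CommRing R] [IsDomain R] [IsNoetherianRing R]
    [IsIntegrallyClosed R] (d : ℕ) : IsIntegrallyClosed (MvPowerSeries (Fin d) R) := by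
  induction d with
  | zero => exact .of_equiv (MvPowerSeries.isEmptyEquiv (Fin 0) R).toRingEquiv.symm
  | succ d ih =>
    have : IsDomain (MvPowerSeries (Fin d) R) := NoZeroDivisors.to_isDomain _
    have := isIntegrallyClosed_powerSeries (R := MvPowerSeries (Fin d) R)
    exact .of_equiv (MvPowerSeries.finSuccEquiv R d).toRingEquiv.symm

end PowerSeriesNormal

theorem stmt_7_general {R : Type} [CommRing R] [IsDomain R] [IsNoetherianRing R]
    [IsIntegrallyClosed R] (M : Type) [AddCommGroup M] [Module R M] [Module.Finite R M]
    (htors : Module.IsTorsion R M) :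
    ∃ f : M →ₗ[R] extModule R (extModule R M R 1) R 1, IsPseudoNull R (LinearMap.ker f) ∧
      IsPseudoNull R (extModule R (extModule R M R 1) R 1 ⧸ LinearMap.range f) := by
  let K := FractionRing R
  obtain ⟨e₁⟩ := nonempty_extModule_one_equiv_fractionQuotient K htors
  have hExt : Module.IsTorsion R (extModule R M R 1) := fun {x} => by
    obtain ⟨a, ha⟩ := isTorsion_linearMap (FractionQuotient R K) htors (x := e₁ x)
    exact ⟨a, e₁.injective (((map_smul e₁ (a : R) x).trans ha).trans (map_zero e₁).symm)⟩
  obtain ⟨e₂⟩ := nonempty_extModule_one_equiv_fractionQuotient K hExt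
  let e : ((M →ₗ[R] FractionQuotient R K) →ₗ[R] FractionQuotient R K) ≃ₗ[R]
      extModule R (extModule R M R 1) R 1 := e₁.symm.congrLeft _ R ≪≫ₗ e₂.symm
  obtain ⟨hker, hcoker⟩ := isPseudoNull_bidualEval K htors
  refine ⟨e.toLinearMap ∘ₗ bidualEval R K M, ?_, ?_⟩
  · rwa [LinearEquiv.ker_comp]
  · exact hcoker.of_linearEquiv (Submodule.Quotient.equiv _ _ e (LinearMap.range_comp _ _).symm)

/-- For Λ = ℤ_p[[T₁,…,T_d]] and M a finitely generated torsion Λ-module,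
there is a pseudo-isomorphism M → Ext^1_Λ(Ext^1_Λ(M,Λ),Λ). -/
theorem stmt_7 (p : ℕ) [Fact p.Prime] (d : ℕ) (hd : 1 ≤ d)
    (M : Type) [AddCommGroup M] [Module (MvPowerSeries (Fin d) ℤ_[p]) M]
    [Module.Finite (MvPowerSeries (Fin d) ℤ_[p]) M]
    (htors : Module.IsTorsion (MvPowerSeries (Fin d) ℤ_[p]) M) :
    ∃ f : M →ₗ[MvPowerSeries (Fin d) ℤ_[p]]
      (extModule (MvPowerSeries (Fin d) ℤ_[p])
        (extModule (MvPowerSeries (Fin d) ℤ_[p]) M (MvPowerSeries (Fin d) ℤ_[p]) 1)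
        (MvPowerSeries (Fin d) ℤ_[p]) 1),
      IsPseudoNull (MvPowerSeries (Fin d) ℤ_[p]) (LinearMap.ker f) ∧
      IsPseudoNull (MvPowerSeries (Fin d) ℤ_[p])
        ((extModule (MvPowerSeries (Fin d) ℤ_[p])
          (extModule (MvPowerSeries (Fin d) ℤ_[p]) M (MvPowerSeries (Fin d) ℤ_[p]) 1)
          (MvPowerSeries (Fin d) ℤ_[p]) 1) ⧸ LinearMap.range f) := by
  have : IsDomain (MvPowerSeries (Fin d) ℤ_[p]) := NoZeroDivisors.to_isDomain _
  have : IsIntegrallyClosed (MvPowerSeries (Fin d) ℤ_[p]) := isIntegrallyClosed_mvPowerSeries _ d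
  exact stmt_7_general M htors
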